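/- Let m > 0, let k : ℝ → ℝ be differentiable, g : ℝ → ℝ be any function, and let z : ℝ → ℂ be twice differentiable satisfying m·z''(t) + g(t)·exp(2·k(t))·z(t) = 0 for all t. Let τ : ℝ → ℝ be differentiable with τ'(s) = exp(−k(τ(s))) for all s, and set w = z ∘ τ. Then w is twice differentiable and satisfies the Gorringe–Leach equation m·w''(s) + m·k'(τ(s))·exp(−k(τ(s)))·w'(s) + g(τ(s))·w(s) = 0 for all s. -/

import Mathlib

/-!
Along a solution of `τ' = v ∘ τ`, differentiation in the new parameter `s` is the operator `v d/dt`
in the old one: `(f ∘ τ)' = (v f') ∘ τ`. Applying it twice gives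
`(f ∘ τ)'' = (v² f'') ∘ τ + (v' ∘ τ) (f ∘ τ)'`. For `v = e^{-k}` the last term is the drag
`-k' e^{-k} (f ∘ τ)'`, and the factor `v² = e^{-2k}` cancels the `e^{2k}` in front of the force.
-/

section TimeChange

variable {𝕜 E : Type*} [NontriviallyNormedField 𝕜] [NormedAddCommGroup E] [NormedSpace 𝕜 E]
  {τ v : 𝕜 → 𝕜} {f : 𝕜 → E}

theorem deriv_comp_of_autonomous (hτ : ∀ s, HasDerivAt τ (v (τ s)) s) (hf : Differentiable 𝕜 f) :
    deriv (f ∘ τ) = (v • deriv f) ∘ τ :=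
  funext fun s => ((hf (τ s)).hasDerivAt.scomp s (hτ s)).deriv

theorem hasDerivAt_deriv_comp_of_autonomous (hτ : ∀ s, HasDerivAt τ (v (τ s)) s)
    (hf : Differentiable 𝕜 f) {s : 𝕜} (hv : DifferentiableAt 𝕜 v (τ s))
    (hf' : DifferentiableAt 𝕜 (deriv f) (τ s)) :
    HasDerivAt (deriv (f ∘ τ))
      (v (τ s) ^ 2 • deriv (deriv f) (τ s) + deriv v (τ s) • deriv (f ∘ τ) s) s := by
  rw [deriv_comp_of_autonomous hτ hf]
  convert (hv.hasDerivAt.smul hf'.hasDerivAt).scomp s (hτ s) using 1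
  simp only [Function.comp_apply, Pi.smul_apply', smul_add, smul_smul, sq, mul_comm]

end TimeChange

section Sundman

variable {E : Type*} [NormedAddCommGroup E] [NormedSpace ℝ E] {k τ : ℝ → ℝ} {z : ℝ → E}

theorem hasDerivAt_deriv_comp_of_sundman (hτ : ∀ s, HasDerivAt τ (Real.exp (-k (τ s))) s)
    (hz : Differentiable ℝ z) {s : ℝ} (hk : DifferentiableAt ℝ k (τ s))
    (hz' : DifferentiableAt ℝ (deriv z) (τ s)) :
    HasDerivAt (deriv (z ∘ τ))
      (Real.exp (-(2 * k (τ s))) • deriv (deriv z) (τ s) -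
        (deriv k (τ s) * Real.exp (-k (τ s))) • deriv (z ∘ τ) s) s := by
  have hv : HasDerivAt (fun t => Real.exp (-k t))
      (-(deriv k (τ s) * Real.exp (-k (τ s)))) (τ s) := by
    simpa only [neg_mul, mul_comm] using hk.hasDerivAt.fun_neg.exp
  have hsq : Real.exp (-k (τ s)) ^ 2 = Real.exp (-(2 * k (τ s))) := by
    rw [← Real.exp_nat_mul, Nat.cast_ofNat, mul_neg]
  simpa only [hv.deriv, hsq, neg_smul, ← sub_eq_add_neg] using
    hasDerivAt_deriv_comp_of_autonomous hτ hz hv.differentiableAt hz'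

theorem gorringe_leach_reparametrization_general {m : ℝ} {g : ℝ → ℝ}
    (hk : Differentiable ℝ k) (hz : Differentiable ℝ z) (hz' : Differentiable ℝ (deriv z))
    (heom : ∀ t, m • deriv (deriv z) t + (g t * Real.exp (2 * k t)) • z t = 0)
    (hτ : ∀ s, HasDerivAt τ (Real.exp (-k (τ s))) s) :
    Differentiable ℝ (z ∘ τ) ∧ Differentiable ℝ (deriv (z ∘ τ)) ∧
      ∀ s, m • deriv (deriv (z ∘ τ)) s +
        m • (deriv k (τ s) * Real.exp (-k (τ s))) • deriv (z ∘ τ) s +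
        g (τ s) • (z ∘ τ) s = 0 := by
  have hw'' s := hasDerivAt_deriv_comp_of_sundman hτ hz (hk (τ s)) (hz' (τ s))
  refine ⟨hz.comp fun s => (hτ s).differentiableAt, fun s => (hw'' s).differentiableAt,
    fun s => ?_⟩
  have hcancel : Real.exp (-(2 * k (τ s))) * (g (τ s) * Real.exp (2 * k (τ s))) = g (τ s) := by
    rw [mul_left_comm, ← Real.exp_add, neg_add_cancel, Real.exp_zero, mul_one]
  calc
    _ = m • Real.exp (-(2 * k (τ s))) • deriv (deriv z) (τ s) + g (τ s) • z (τ s) := by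
      rw [(hw'' s).deriv, ← smul_add, sub_add_cancel, Function.comp_apply]
    _ = Real.exp (-(2 * k (τ s))) •
        (m • deriv (deriv z) (τ s) + (g (τ s) * Real.exp (2 * k (τ s))) • z (τ s)) := by
      rw [smul_add, smul_smul _ _ (z (τ s)), hcancel, smul_comm]
    _ = 0 := by rw [heom, smul_zero]

end Sundman

/-- If `z` satisfies `m·z'' + g(t)·e^{2k(t)}·z = 0` and `τ` is the inverse
Euler–Sundman reparametrization, `τ'(s) = e^{−k(τ(s))}`, then `w = z ∘ τ` is twice
differentiable and satisfies the Gorringe–Leach equation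
`m·w'' + m·k'(τ)·e^{−k(τ)}·w' + g(τ)·w = 0`. -/
theorem gorringe_leach_reparametrization (m : ℝ) (hm : 0 < m)
    (k : ℝ → ℝ) (hk : Differentiable ℝ k) (g : ℝ → ℝ)
    (z : ℝ → ℂ) (hz : Differentiable ℝ z) (hz' : Differentiable ℝ (deriv z))
    (heom : ∀ t, (m : ℂ) * deriv (deriv z) t +
      ((g t * Real.exp (2 * k t) : ℝ) : ℂ) * z t = 0)
    (τ : ℝ → ℝ) (hτ : Differentiable ℝ τ)
    (hτ' : ∀ s, deriv τ s = Real.exp (-(k (τ s))))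
    (w : ℝ → ℂ) (hw : ∀ s, w s = z (τ s)) :
    Differentiable ℝ w ∧ Differentiable ℝ (deriv w) ∧
      ∀ s, (m : ℂ) * deriv (deriv w) s +
        (m : ℂ) * ((deriv k (τ s) * Real.exp (-(k (τ s))) : ℝ) : ℂ) * deriv w s +
        ((g (τ s) : ℝ) : ℂ) * w s = 0 := by
  obtain rfl : w = z ∘ τ := funext hw
  simpa only [Complex.real_smul, mul_assoc] using gorringe_leach_reparametrization_general
    hk hz hz' heom fun s => hτ' s ▸ (hτ s).hasDerivAt
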